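/- arXiv:2006.08406 — 3 statements merged into one kernel-verified Lean document; each statement's English description precedes it below -/
import Mathlib

section
/- For all x with 0 < |x| < 1/2 (real x, x not a half-integer multiple), ∑_{k=1}^{∞} ζ(2k+1)·x^{2k+1} = −πx·∫₀¹ (sin(2πxu)/sin(2πx) − u)·cot(πu) du. -/
open Real Complex intervalIntegral

/-!
Put `f u = sin (2πzu) / sin (2πz) - u`, which vanishes at both endpoints of `[0, 1]`. The partial
sums of the divergent expansion `cot (πu) ~ ∑ 2 sin (2π(n+1)u)` miss `cot (πu)` by exactly
`cos ((2N+1)πu) / sin (πu)`. As `f` is Lipschitz, `f u / sin (πu)` is bounded, so by the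
Riemann-Lebesgue lemma the remainder integrates to zero against `f` in the limit. Hence
`∫ f u cot (πu)` is the sum of the sine coefficients of `f`, and `-πz` times the `n`-th of these is
`z³ / ((n+1) ((n+1)² - z²))`. Expanding the latter as a geometric series in `z / (n+1)` and summing
over `n` first produces the zeta values.
-/

section CosineRiemannLebesgue

open Filter MeasureTheory Topology
open scoped FourierTransform

variable {E : Type*} [NormedAddCommGroup E] [NormedSpace ℂ E]

lemma tendsto_integral_cos_smul_cocompact {f : ℝ → E} (hf : Integrable f) :
    Tendsto (fun w : ℝ ↦ ∫ u, Real.cos (2 * π * w * u) • f u) (cocompact ℝ) (𝓝 0) := by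
  have hexp := Real.tendsto_integral_exp_smul_cocompact f
  have hexp_neg := hexp.comp (Homeomorph.neg ℝ).isClosedEmbedding.tendsto_cocompact
  have hint (w : ℝ) : Integrable fun u ↦ 𝐞 (-(u * w)) • f u := by
    simpa [mul_comm] using (Real.fourierIntegral_convergent_iff w).2 hf
  have hcos (w u : ℝ) : Real.cos (2 * π * w * u) • f u =
      (2⁻¹ : ℂ) • (𝐞 (-(u * w)) • f u + 𝐞 (-(u * -w)) • f u) := by
    simp only [Circle.smul_def, Real.fourierChar_apply, ← add_smul, smul_smul]
    rw [← Complex.coe_smul, Complex.ofReal_cos, Complex.cos, add_comm, inv_mul_eq_div]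
    congr 5 <;> push_cast <;> ring
  simp only [hcos, MeasureTheory.integral_smul, MeasureTheory.integral_add (hint _) (hint _)]
  simpa only [add_zero, smul_zero] using! (hexp.add hexp_neg).const_smul (2⁻¹ : ℂ)

lemma tendsto_intervalIntegral_cos_smul_cocompact {f : ℝ → E} {a b : ℝ}
    (hf : IntervalIntegrable f volume a b) :
    Tendsto (fun w : ℝ ↦ ∫ u in a..b, Real.cos (2 * π * w * u) • f u) (cocompact ℝ) (𝓝 0) := by
  have hind : Integrable ((Set.uIoc a b).indicator f) :=
    (integrable_indicator_iff measurableSet_uIoc).2 (intervalIntegrable_iff.1 hf)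
  simp only [intervalIntegral_eq_integral_uIoc,
    ← MeasureTheory.integral_indicator measurableSet_uIoc, Set.indicator_smul]
  simpa only [smul_zero] using
    (tendsto_integral_cos_smul_cocompact hind).const_smul (if a ≤ b then 1 else -1 : ℝ)

end CosineRiemannLebesgue

section CotangentIntegral

open Filter MeasureTheory Set Topology
open scoped NNReal

lemma cot_eq_sum_sin_add_cos_div_sin {θ : ℝ} (hθ : Real.sin θ ≠ 0) (N : ℕ) :
    Real.cot θ = ∑ n ∈ Finset.range N, 2 * Real.sin (2 * (n + 1) * θ)
      + Real.cos ((2 * N + 1) * θ) / Real.sin θ := by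
  induction N with
  | zero => simp [Real.cot_eq_cos_div_sin]
  | succ N ih =>
    have hcos : Real.cos ((2 * N + 1) * θ) - Real.cos ((2 * (N + 1) + 1) * θ) =
        2 * Real.sin (2 * (N + 1) * θ) * Real.sin θ := by
      rw [Real.two_mul_sin_mul_sin]
      ring_nf
    rw [Finset.sum_range_succ, ih, add_assoc, ← sub_eq_iff_eq_add', add_sub_cancel_left,
      Nat.cast_add_one]
    rw [eq_add_of_sub_eq hcos, add_div, mul_div_cancel_right₀ _ hθ]

lemma two_mul_min_le_sin_pi_mul {u : ℝ} (hu : u ∈ Icc (0 : ℝ) 1) :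
    2 * min u (1 - u) ≤ Real.sin (π * u) := by
  have hlinear {v : ℝ} (h0 : 0 ≤ v) (h1 : v ≤ 1 / 2) : 2 * v ≤ Real.sin (π * v) := by
    calc 2 * v = 2 / π * (π * v) := by field_simp
      _ ≤ Real.sin (π * v) := Real.mul_le_sin (by positivity) (by nlinarith [Real.pi_pos])
  rcases le_total u (1 / 2) with h | h
  · rw [min_eq_left (by linarith)]
    exact hlinear hu.1 h
  · rw [min_eq_right (by linarith), ← Real.sin_pi_sub, ← mul_one_sub]
    exact hlinear (by linarith [hu.2]) (by linarith)

lemma norm_le_mul_sin_pi_mul {E : Type*} [SeminormedAddCommGroup E] {f : ℝ → E} {K : ℝ≥0}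
    (hf : LipschitzOnWith K f (Icc 0 1)) (h0 : f 0 = 0) (h1 : f 1 = 0) {u : ℝ}
    (hu : u ∈ Icc (0 : ℝ) 1) : ‖f u‖ ≤ K / 2 * Real.sin (π * u) := by
  have hleft : ‖f u‖ ≤ K * u := by
    simpa [h0, abs_of_nonneg hu.1] using hf.norm_sub_le hu (left_mem_Icc.2 zero_le_one)
  have hright : ‖f u‖ ≤ K * (1 - u) := by
    simpa [h1, abs_of_nonneg (sub_nonneg.2 hu.2)]
      using hf.norm_sub_le (right_mem_Icc.2 zero_le_one) hu
  calc ‖f u‖ ≤ K * min u (1 - u) := by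
        rw [mul_min_of_nonneg _ _ K.coe_nonneg]
        exact le_min hleft hright
    _ = K / 2 * (2 * min u (1 - u)) := by ring
    _ ≤ K / 2 * Real.sin (π * u) := by
        gcongr
        exact two_mul_min_le_sin_pi_mul hu

lemma intervalIntegrable_inv_sin_pi_mul_smul {E : Type*} [NormedAddCommGroup E] [NormedSpace ℝ E]
    {f : ℝ → E} {K : ℝ≥0} (hf : LipschitzOnWith K f (Icc 0 1)) (h0 : f 0 = 0) (h1 : f 1 = 0) :
    IntervalIntegrable (fun u ↦ (Real.sin (π * u))⁻¹ • f u) volume 0 1 := by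
  refine IntegrableOn.intervalIntegrable ?_
  rw [uIcc_of_le zero_le_one]
  refine IntegrableOn.of_bound measure_Icc_lt_top ?_ (K / 2) ?_
  · exact (Measurable.aestronglyMeasurable (by fun_prop)).smul
      (hf.continuousOn.aestronglyMeasurable measurableSet_Icc)
  · filter_upwards [ae_restrict_mem measurableSet_Icc] with u hu
    have hsin : 0 ≤ Real.sin (π * u) :=
      Real.sin_nonneg_of_nonneg_of_le_pi (mul_nonneg Real.pi_nonneg hu.1)
        (mul_le_of_le_one_right Real.pi_nonneg hu.2)
    rw [norm_smul, norm_inv, Real.norm_of_nonneg hsin, inv_mul_eq_div]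
    exact div_le_of_le_mul₀ hsin (by positivity) (norm_le_mul_sin_pi_mul hf h0 h1 hu)

lemma integral_cot_smul_eq_sum_add {E : Type*} [NormedAddCommGroup E] [NormedSpace ℝ E]
    {f : ℝ → E} {K : ℝ≥0} (hf : LipschitzOnWith K f (Icc 0 1)) (h0 : f 0 = 0) (h1 : f 1 = 0)
    (N : ℕ) :
    ∫ u in (0 : ℝ)..1, Real.cot (π * u) • f u =
      (∑ n ∈ Finset.range N, ∫ u in (0 : ℝ)..1, (2 * Real.sin (2 * π * (n + 1) * u)) • f u)
        + ∫ u in (0 : ℝ)..1, Real.cos (2 * π * (N + 1 / 2) * u) • (Real.sin (π * u))⁻¹ • f u := by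
  have hsin_int (n : ℕ) :
      IntervalIntegrable (fun u ↦ (2 * Real.sin (2 * π * (n + 1) * u)) • f u) volume 0 1 := by
    refine ContinuousOn.intervalIntegrable (ContinuousOn.smul (by fun_prop) ?_)
    simpa using hf.continuousOn
  have hcos_int : IntervalIntegrable
      (fun u ↦ Real.cos (2 * π * (N + 1 / 2) * u) • (Real.sin (π * u))⁻¹ • f u) volume 0 1 :=
    (intervalIntegrable_inv_sin_pi_mul_smul hf h0 h1).continuousOn_smul (by fun_prop)
  have hsum_int : IntervalIntegrable
      (fun u ↦ ∑ n ∈ Finset.range N, (2 * Real.sin (2 * π * (n + 1) * u)) • f u) volume 0 1 := by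
    simpa [Finset.sum_fn] using IntervalIntegrable.sum (Finset.range N) fun n _ ↦ hsin_int n
  rw [← integral_finsetSum fun n _ ↦ hsin_int n, ← integral_add hsum_int hcos_int]
  refine integral_congr_Ioo_of_le zero_le_one fun u hu ↦ ?_
  have hsin : Real.sin (π * u) ≠ 0 :=
    (Real.sin_pos_of_pos_of_lt_pi (mul_pos Real.pi_pos hu.1)
      (mul_lt_of_lt_one_right Real.pi_pos hu.2)).ne'
  have hsin_arg (n : ℕ) : 2 * (n + 1) * (π * u) = 2 * π * (n + 1) * u := by ring
  have hcos_arg : (2 * N + 1) * (π * u) = 2 * π * (N + 1 / 2) * u := by ring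
  simp only [cot_eq_sum_sin_add_cos_div_sin hsin N, hsin_arg, hcos_arg, add_smul,
    Finset.sum_smul, smul_smul, div_eq_mul_inv]

lemma tendsto_sum_integral_sin_smul {E : Type*} [NormedAddCommGroup E] [NormedSpace ℂ E]
    {f : ℝ → E} {K : ℝ≥0} (hf : LipschitzOnWith K f (Icc 0 1)) (h0 : f 0 = 0) (h1 : f 1 = 0) :
    Tendsto (fun N ↦ ∑ n ∈ Finset.range N,
        ∫ u in (0 : ℝ)..1, (2 * Real.sin (2 * π * (n + 1) * u)) • f u)
      atTop (𝓝 (∫ u in (0 : ℝ)..1, Real.cot (π * u) • f u)) := by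
  have hfreq : Tendsto (fun N : ℕ ↦ (N : ℝ) + 1 / 2) atTop (cocompact ℝ) :=
    (tendsto_atTop_add_const_right _ _ tendsto_natCast_atTop_atTop).mono_right atTop_le_cocompact
  have hremainder := (tendsto_intervalIntegral_cos_smul_cocompact
    (intervalIntegrable_inv_sin_pi_mul_smul hf h0 h1)).comp hfreq
  have hpartial := (tendsto_const_nhds (f := atTop)
    (x := ∫ u in (0 : ℝ)..1, Real.cot (π * u) • f u)).sub hremainder
  rw [sub_zero] at hpartial
  refine hpartial.congr fun N ↦ ?_
  rw [integral_cot_smul_eq_sum_add hf h0 h1 N]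
  exact add_sub_cancel_right _ _

end CotangentIntegral

section SineCoefficients

open Filter Topology

lemma sin_two_pi_mul_natCast (m : ℕ) : Complex.sin (2 * π * m) = 0 := by
  simpa [mul_comm] using Complex.sin_add_nat_mul_two_pi 0 m

lemma integral_two_mul_sin_mul_sin {a b : ℂ} (hsub : a - b ≠ 0) (hadd : a + b ≠ 0) :
    ∫ u in (0 : ℝ)..1, 2 * Complex.sin (a * u) * Complex.sin (b * u) =
      Complex.sin (a - b) / (a - b) - Complex.sin (a + b) / (a + b) := by
  have hprod (u : ℝ) : 2 * Complex.sin (a * u) * Complex.sin (b * u) =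
      Complex.cos ((a - b) * u) - Complex.cos ((a + b) * u) := by
    rw [sub_mul, add_mul, Complex.cos_sub, Complex.cos_add]
    ring
  simp only [hprod]
  rw [integral_sub (Continuous.intervalIntegrable (by fun_prop) _ _)
    (Continuous.intervalIntegrable (by fun_prop) _ _), integral_cos_mul_complex hsub,
    integral_cos_mul_complex hadd]
  simp

lemma integral_id_mul_sin {c : ℂ} (hc : c ≠ 0) :
    ∫ u in (0 : ℝ)..1, u * Complex.sin (c * u) = Complex.sin c / c ^ 2 - Complex.cos c / c := by
  have hderiv (u : ℝ) : HasDerivAt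
      (fun v : ℝ ↦ Complex.sin (c * v) / c ^ 2 - v * Complex.cos (c * v) / c)
      (u * Complex.sin (c * u)) u := by
    have hmul : HasDerivAt (fun v : ℂ ↦ c * v) c u := hasDerivAt_const_mul c
    convert! ((hmul.csin.div_const (c ^ 2)).sub
      (((hasDerivAt_id (u : ℂ)).mul hmul.ccos).div_const c)).comp_ofReal using 1
    simp only [id]
    field_simp
    ring
  rw [integral_eq_sub_of_hasDerivAt (fun u _ ↦ hderiv u)
    (Continuous.intervalIntegrable (by fun_prop) _ _)]
  simp

lemma integral_two_mul_sin_mul_sin_two_pi_natCast {z : ℂ} {m : ℕ} (hzm : z ^ 2 ≠ m ^ 2) :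
    ∫ u in (0 : ℝ)..1, 2 * Complex.sin (2 * π * z * u) * Complex.sin (2 * π * m * u) =
      m * Complex.sin (2 * π * z) / (π * (z ^ 2 - m ^ 2)) := by
  have h2π : (2 * π : ℂ) ≠ 0 := mod_cast Real.two_pi_pos.ne'
  have hfactor : (z + m) * (z - m) ≠ 0 := by rwa [← sq_sub_sq, sub_ne_zero]
  obtain ⟨hadd, hsub⟩ := mul_ne_zero_iff.1 hfactor
  have hsin_sub : Complex.sin (2 * π * (z - m)) = Complex.sin (2 * π * z) := by
    rw [mul_sub, mul_comm _ (m : ℂ), Complex.sin_sub_nat_mul_two_pi]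
  have hsin_add : Complex.sin (2 * π * (z + m)) = Complex.sin (2 * π * z) := by
    rw [mul_add, mul_comm _ (m : ℂ), Complex.sin_add_nat_mul_two_pi]
  rw [integral_two_mul_sin_mul_sin (by rw [← mul_sub]; exact mul_ne_zero h2π hsub)
    (by rw [← mul_add]; exact mul_ne_zero h2π hadd), ← mul_sub, ← mul_add, hsin_sub, hsin_add,
    sq_sub_sq]
  field_simp
  ring

lemma integral_id_mul_sin_two_pi_natCast {m : ℕ} (hm : m ≠ 0) :
    ∫ u in (0 : ℝ)..1, u * Complex.sin (2 * π * m * u) = -1 / (2 * π * m) := by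
  have hc : (2 * π * m : ℂ) ≠ 0 :=
    mul_ne_zero (mod_cast Real.two_pi_pos.ne') (Nat.cast_ne_zero.2 hm)
  have hcos : Complex.cos (2 * π * m) = 1 := by
    simpa [mul_comm] using Complex.cos_nat_mul_two_pi m
  rw [integral_id_mul_sin hc, sin_two_pi_mul_natCast, hcos]
  ring

lemma sq_ne_natCast_sq_of_sin_two_pi_mul_ne_zero {z : ℂ} (hz : Complex.sin (2 * π * z) ≠ 0)
    (m : ℕ) : z ^ 2 ≠ m ^ 2 := by
  intro hzm
  rcases sq_eq_sq_iff_eq_or_eq_neg.1 hzm with rfl | rfl <;> simp [sin_two_pi_mul_natCast] at hz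

lemma integral_sin_div_sin_sub_id_mul_sin {z : ℂ} (hz : Complex.sin (2 * π * z) ≠ 0) {m : ℕ}
    (hm : m ≠ 0) :
    ∫ u in (0 : ℝ)..1, 2 * Complex.sin (2 * π * m * u) *
        (Complex.sin (2 * π * z * u) / Complex.sin (2 * π * z) - u) =
      -z ^ 2 / (π * (m * (m ^ 2 - z ^ 2))) := by
  have hzm := sq_ne_natCast_sq_of_sin_two_pi_mul_ne_zero hz m
  have hsplit (u : ℝ) : 2 * Complex.sin (2 * π * m * u) *
        (Complex.sin (2 * π * z * u) / Complex.sin (2 * π * z) - u) =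
      (Complex.sin (2 * π * z))⁻¹ *
          (2 * Complex.sin (2 * π * z * u) * Complex.sin (2 * π * m * u))
        - 2 * (u * Complex.sin (2 * π * m * u)) := by ring
  simp only [hsplit]
  rw [integral_sub (Continuous.intervalIntegrable (by fun_prop) _ _)
    (Continuous.intervalIntegrable (by fun_prop) _ _), integral_const_mul, integral_const_mul,
    integral_two_mul_sin_mul_sin_two_pi_natCast hzm, integral_id_mul_sin_two_pi_natCast hm]
  have hπ : (π : ℂ) ≠ 0 := Complex.ofReal_ne_zero.2 Real.pi_ne_zero
  have hm' : (m : ℂ) ≠ 0 := Nat.cast_ne_zero.2 hm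
  have hsub : (m : ℂ) ^ 2 - z ^ 2 ≠ 0 := sub_ne_zero.2 hzm.symm
  rw [← neg_sub (_ ^ 2)]
  field_simp
  ring

lemma tendsto_sum_pow_three_div {z : ℂ} (hz : Complex.sin (2 * π * z) ≠ 0) :
    Tendsto (fun N ↦ ∑ n ∈ Finset.range N, z ^ 3 / ((n + 1) * ((n + 1) ^ 2 - z ^ 2))) atTop
      (𝓝 (-π * z * ∫ u in (0 : ℝ)..1,
        (Complex.sin (2 * π * z * u) / Complex.sin (2 * π * z) - u) * Complex.cot (π * u))) := by
  let f (u : ℝ) : ℂ := Complex.sin (2 * π * z * u) / Complex.sin (2 * π * z) - u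
  have hf : ContDiff ℝ 1 f :=
    (((Complex.contDiff_sin.restrict_scalars ℝ).comp
      (contDiff_const.mul ofRealCLM.contDiff)).div_const _).sub ofRealCLM.contDiff
  obtain ⟨K, hK⟩ :=
    hf.contDiffOn.exists_lipschitzOnWith one_ne_zero (convex_Icc 0 1) isCompact_Icc
  have hcot := tendsto_sum_integral_sin_smul hK (by simp [f]) (by simp [f, hz])
  have hcoeff (n : ℕ) : -π * z * ∫ u in (0 : ℝ)..1, (2 * Real.sin (2 * π * (n + 1) * u)) • f u =
      z ^ 3 / ((n + 1) * ((n + 1) ^ 2 - z ^ 2)) := by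
    have hintegral := integral_sin_div_sin_sub_id_mul_sin hz n.succ_ne_zero
    push_cast at hintegral
    simp only [f, Complex.real_smul]
    push_cast
    rw [hintegral]
    field_simp
  convert! hcot.const_mul (-π * z : ℂ) using 2
  · simp only [Finset.mul_sum, hcoeff]
  · simp [f, mul_comm (Complex.cot _)]

end SineCoefficients

section ZetaSeries

lemma hasSum_div_add_one_pow (z : ℂ) {k : ℕ} (hk : 1 < k) :
    HasSum (fun n : ℕ ↦ (z / (n + 1)) ^ k) (riemannZeta k * z ^ k) := by
  have hzeta : HasSum (fun n : ℕ ↦ 1 / (n : ℂ) ^ k) (riemannZeta k) := by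
    rw [zeta_nat_eq_tsum_of_gt_one hk]
    refine Summable.hasSum ?_
    simpa using Complex.ofRealCLM.summable (Real.summable_one_div_nat_pow.2 hk)
  have hshift := (hasSum_nat_add_iff' 1).2 hzeta
  simp only [Finset.range_one, Finset.sum_singleton, Nat.cast_zero,
    zero_pow (Nat.ne_zero_of_lt hk), div_zero, sub_zero, Nat.cast_add_one] at hshift
  simpa only [div_pow, one_div_mul_eq_div] using hshift.mul_right (z ^ k)

lemma hasSum_odd_pow {w : ℂ} (hw : ‖w‖ < 1) :
    HasSum (fun k : ℕ ↦ w ^ (2 * (k + 1) + 1)) (w ^ 3 / (1 - w ^ 2)) := by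
  have hsq : ‖w ^ 2‖ < 1 := by simpa using pow_lt_one₀ (norm_nonneg w) hw two_ne_zero
  rw [div_eq_mul_inv]
  refine ((hasSum_geometric_of_norm_lt_one hsq).mul_left (w ^ 3)).congr_fun fun k ↦ ?_
  ring

lemma norm_natCast_add_one (n : ℕ) : ‖(n : ℂ) + 1‖ = n + 1 := by
  exact_mod_cast Complex.norm_natCast (n + 1)

lemma summable_div_add_one_odd_pow {z : ℂ} (hz : ‖z‖ < 1) :
    Summable fun p : ℕ × ℕ ↦ (z / (p.1 + 1)) ^ (2 * (p.2 + 1) + 1) := by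
  have hsq : Summable fun n : ℕ ↦ 1 / ((n : ℝ) + 1) ^ 2 := by
    exact_mod_cast (summable_nat_add_iff 1).2 (Real.summable_one_div_nat_pow.2 one_lt_two)
  have hgeom : Summable fun k : ℕ ↦ ‖z‖ ^ k := summable_geometric_of_lt_one (norm_nonneg z) hz
  refine .of_norm_bounded (hsq.mul_of_nonneg hgeom (fun _ ↦ by positivity)
    fun _ ↦ by positivity) fun ⟨n, k⟩ ↦ ?_
  rw [norm_pow, norm_div, norm_natCast_add_one, div_pow, one_div_mul_eq_div]
  gcongr ?_ / ?_
  · exact pow_le_pow_of_le_one (norm_nonneg z) hz.le (by lia)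
  · exact pow_le_pow_right₀ (by simp) (by lia)

lemma hasSum_div_add_one_odd_pow {z : ℂ} (hz : ‖z‖ < 1) (n : ℕ) :
    HasSum (fun k : ℕ ↦ (z / (n + 1)) ^ (2 * (k + 1) + 1))
      (z ^ 3 / ((n + 1) * ((n + 1) ^ 2 - z ^ 2))) := by
  have hn : (n : ℂ) + 1 ≠ 0 := Nat.cast_add_one_ne_zero n
  have hw : ‖z / (n + 1)‖ < 1 := by
    rw [norm_div, norm_natCast_add_one]
    exact (div_le_self (norm_nonneg z) (by simp)).trans_lt hz
  convert! hasSum_odd_pow hw using 1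
  rw [div_pow, div_pow, div_div, one_sub_div (pow_ne_zero 2 hn)]
  congr 1
  field_simp

lemma summable_pow_three_div {z : ℂ} (hz : ‖z‖ < 1) :
    Summable fun n : ℕ ↦ z ^ 3 / ((n + 1) * ((n + 1) ^ 2 - z ^ 2)) :=
  ((summable_div_add_one_odd_pow hz).hasSum.prod_fiberwise (hasSum_div_add_one_odd_pow hz)).summable

lemma hasSum_zeta_odd_mul_pow {z : ℂ} (hz : ‖z‖ < 1) :
    HasSum (fun k : ℕ ↦ riemannZeta (2 * (k + 1) + 1) * z ^ (2 * (k + 1) + 1))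
      (∑' n : ℕ, z ^ 3 / ((n + 1) * ((n + 1) ^ 2 - z ^ 2))) := by
  have hdouble := (summable_div_add_one_odd_pow hz).hasSum
  rw [(hdouble.prod_fiberwise (hasSum_div_add_one_odd_pow hz)).tsum_eq]
  refine ((Equiv.prodComm ℕ ℕ).hasSum_iff.2 hdouble).prod_fiberwise fun k ↦ ?_
  exact_mod_cast hasSum_div_add_one_pow z (k := 2 * (k + 1) + 1) (by lia)

end ZetaSeries

lemma sin_two_pi_mul_ne_zero {x : ℝ} (hx0 : x ≠ 0) (hx : |x| < 1 / 2) :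
    Real.sin (2 * π * x) ≠ 0 := by
  obtain ⟨hneg, hpos⟩ := abs_lt.1 hx
  rw [Ne, Real.sin_eq_zero_iff_of_lt_of_lt (by nlinarith [Real.pi_pos])
    (by nlinarith [Real.pi_pos])]
  simp [hx0, Real.pi_ne_zero]

theorem zeta_odd_generating_function_general {z : ℂ} (hz : ‖z‖ < 1)
    (hsin : Complex.sin (2 * π * z) ≠ 0) :
    HasSum (fun k : ℕ ↦ riemannZeta (2 * (k + 1) + 1) * z ^ (2 * (k + 1) + 1))
      (-π * z * ∫ u in (0 : ℝ)..1,
        (Complex.sin (2 * π * z * u) / Complex.sin (2 * π * z) - u) * Complex.cot (π * u)) := by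
  have hseries := (summable_pow_three_div hz).hasSum.tendsto_sum_nat
  rw [← tendsto_nhds_unique hseries (tendsto_sum_pow_three_div hsin)]
  exact hasSum_zeta_odd_mul_pow hz

theorem zeta_odd_generating_function (x : ℝ) (hx0 : 0 < |x|) (hx : |x| < 1 / 2) :
    (∑' k : ℕ, riemannZeta (2 * (k + 1) + 1) * ((x : ℂ)) ^ (2 * (k + 1) + 1)) =
      ((-π * x * ∫ u in (0:ℝ)..1,
        (Real.sin (2 * π * x * u) / Real.sin (2 * π * x) - u) * Real.cot (π * u) : ℝ) : ℂ) := by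
  have hsin : Complex.sin (2 * π * x) ≠ 0 :=
    mod_cast sin_two_pi_mul_ne_zero (abs_pos.1 hx0) hx
  rw [(zeta_odd_generating_function_general (by simpa using hx.trans one_half_lt_one) hsin).tsum_eq]
  push_cast [← intervalIntegral.integral_ofReal]
  rfl
end

section
/- For every integer k ≥ 0 and real m with |m| > 1 (or |m|=1 and k ≥ 1), ∑_{j=1}^{∞} cos(2πj/m)/j^{2k+1} = ∑_{j=1}^{k} ((-1)^{k-j}/(2k-2j)!)·(2π/m)^{2k-2j}·ζ(2j+1) + ((-1)^k/(2k)!)·(2π/m)^{2k}·log|m| − ((-1)^k/(2(2k)!))·(2π/m)^{2k+1}·∫₀¹ (1-u)^{2k}·cot(πu/m) − m(1-u)·cot(πu) du. -/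
open Real Complex Filter intervalIntegral

/-!
Taylor's formula for `cos ((j + 1) * 2 * c)`, `c = π / m`, to order `2 * k`, with its remainder
written as an iterated integral, is divided by `(j + 1) ^ (2 * k + 1)` and summed over `j`.  The
polynomial part gives the odd zeta values.  In the remainder the Fourier series
`∑ cos ((j + 1) * t) / (j + 1) = -log |2 * sin (t / 2)|` appears under the integral sign, by Abel
summation and dominated convergence, so the remainder is a multiple of the `2 * k`-fold iterated
integral of `log |2 * sin (c * u)|`.  One integration by parts turns the logarithm into
`cot (c * u)`.  The singularity `1 / u` this creates at `0` is cancelled against the same identity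
with `c = π` and order `1`, for which the log-sine integral vanishes.  The cotangent differences are
integrable because `x * cot x ≤ 1` bounds the derivative of a continuous function from one side by
an integrable one.
-/

section IteratedIntegral

open MeasureTheory
open scoped Topology Nat

/-- The value at `1` of the `n`-fold iterated integral of `f` from `0`, written as a single integral
by Cauchy's formula for repeated integration.  For `n = 0` it is `f 1`, so that Taylor's
formula with this remainder also holds at order `0`. -/
noncomputable def iteratedIntegral : ℕ → (ℝ → ℝ) → ℝ
  | 0, f => f 1
  | n + 1, f => ∫ u in (0 : ℝ)..1, (1 - u) ^ n / n ! * f u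

lemma abs_one_sub_pow_div_factorial_le (n : ℕ) {u : ℝ} (hu : u ∈ Set.Icc (0 : ℝ) 1) :
    |(1 - u) ^ n / n !| ≤ 1 := by
  rw [abs_of_nonneg (div_nonneg (pow_nonneg (sub_nonneg.2 hu.2) n) (Nat.cast_nonneg _))]
  refine div_le_one_of_le₀ ?_ (Nat.cast_nonneg _)
  exact (pow_le_one₀ (sub_nonneg.2 hu.2) (sub_le_self _ hu.1)).trans
    (mod_cast Nat.one_le_iff_ne_zero.2 n.factorial_ne_zero)

lemma abs_one_sub_pow_div_factorial_mul_le (n : ℕ) {u : ℝ} (hu : u ∈ Set.Icc (0 : ℝ) 1) (x : ℝ) :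
    |(1 - u) ^ n / n ! * x| ≤ |x| := by
  rw [abs_mul]
  exact mul_le_of_le_one_left (abs_nonneg _) (abs_one_sub_pow_div_factorial_le n hu)

lemma uIoc_zero_one_subset_Icc : Set.uIoc (0 : ℝ) 1 ⊆ Set.Icc 0 1 := by
  rw [Set.uIoc_of_le zero_le_one]
  exact Set.Ioc_subset_Icc_self

lemma iteratedIntegral_const_mul (n : ℕ) (a : ℝ) (f : ℝ → ℝ) :
    iteratedIntegral n (fun u ↦ a * f u) = a * iteratedIntegral n f := by
  cases n with
  | zero => rfl
  | succ n => simp only [iteratedIntegral, mul_left_comm _ a, intervalIntegral.integral_const_mul]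

lemma factorial_mul_iteratedIntegral (n : ℕ) (f : ℝ → ℝ) :
    n ! * iteratedIntegral n f =
      0 ^ n * f 1 + n * ∫ u in (0 : ℝ)..1, (1 - u) ^ (n - 1) * f u := by
  cases n with
  | zero => simp [iteratedIntegral]
  | succ n =>
    have hn : (n ! : ℝ) ≠ 0 := mod_cast n.factorial_ne_zero
    simp only [iteratedIntegral, div_mul_eq_mul_div, intervalIntegral.integral_div,
      Nat.factorial_succ, Nat.cast_mul, zero_pow n.succ_ne_zero, Nat.add_sub_cancel]
    field_simp
    ring

lemma hasDerivAt_one_sub_pow_div_factorial (n : ℕ) (u : ℝ) :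
    HasDerivAt (fun u : ℝ ↦ (1 - u) ^ (n + 1) / (n + 1) !) (-((1 - u) ^ n / n !)) u := by
  refine ((((hasDerivAt_id u).const_sub 1).pow (n + 1)).div_const _).congr_deriv ?_
  rw [Nat.factorial_succ, Nat.add_sub_cancel]
  push_cast
  field_simp
  rfl

lemma iteratedIntegral_succ_deriv (n : ℕ) {g g' : ℝ → ℝ}
    (hg : ∀ u ∈ Set.uIcc 0 1, HasDerivAt g (g' u) u)
    (hg' : IntervalIntegrable g' volume 0 1) :
    iteratedIntegral (n + 1) g' = iteratedIntegral n g - g 0 / n ! := by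
  cases n with
  | zero => simpa [iteratedIntegral] using integral_eq_sub_of_hasDerivAt hg hg'
  | succ n =>
    have hparts := intervalIntegral.integral_mul_deriv_eq_deriv_mul
      (fun u _ ↦ hasDerivAt_one_sub_pow_div_factorial n u) hg
      (Continuous.intervalIntegrable (by fun_prop) 0 1) hg'
    simp only [iteratedIntegral, hparts, neg_mul, intervalIntegral.integral_neg, sub_self, sub_zero,
      one_pow, zero_pow n.succ_ne_zero, zero_div, zero_mul]
    ring

lemma abs_iteratedIntegral_le (n : ℕ) {f : ℝ → ℝ} {C : ℝ}
    (hf : ∀ u ∈ Set.Icc (0 : ℝ) 1, |f u| ≤ C) :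
    |iteratedIntegral n f| ≤ C := by
  cases n with
  | zero => exact hf 1 (Set.right_mem_Icc.2 zero_le_one)
  | succ n =>
    simpa [iteratedIntegral] using intervalIntegral.norm_integral_le_of_norm_le_const
      (f := fun u ↦ (1 - u) ^ n / n ! * f u) (C := C) fun u hu ↦
      (abs_one_sub_pow_div_factorial_mul_le n (uIoc_zero_one_subset_Icc hu) (f u)).trans
        (hf u (uIoc_zero_one_subset_Icc hu))

lemma hasSum_iteratedIntegral (n : ℕ) {F : ℕ → ℝ → ℝ} {f : ℝ → ℝ} {b : ℕ → ℝ}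
    (hF : ∀ j, Continuous (F j)) (hb : Summable b)
    (hFb : ∀ j, ∀ u ∈ Set.Icc (0 : ℝ) 1, |F j u| ≤ b j)
    (hFf : ∀ u ∈ Set.Icc (0 : ℝ) 1, HasSum (F · u) (f u)) :
    HasSum (fun j ↦ iteratedIntegral n (F j)) (iteratedIntegral n f) := by
  cases n with
  | zero => exact hFf 1 (Set.right_mem_Icc.2 zero_le_one)
  | succ n =>
    refine intervalIntegral.hasSum_integral_of_dominated_convergence (fun j _ ↦ b j)
      (fun j ↦ Continuous.aestronglyMeasurable (by fun_prop))
      (fun j ↦ .of_forall fun u hu ↦ ?_) (.of_forall fun _ _ ↦ hb) intervalIntegrable_const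
      (.of_forall fun u hu ↦ (hFf u (uIoc_zero_one_subset_Icc hu)).mul_left _)
    exact (abs_one_sub_pow_div_factorial_mul_le n (uIoc_zero_one_subset_Icc hu) _).trans
      (hFb j u (uIoc_zero_one_subset_Icc hu))

lemma tendsto_iteratedIntegral {ι : Type*} {l : Filter ι} [l.IsCountablyGenerated] {n : ℕ}
    {F : ι → ℝ → ℝ} {f b : ℝ → ℝ} (hF : ∀ᶠ i in l, Continuous (F i))
    (hb : IntervalIntegrable b volume 0 1) (hFb : ∀ᶠ i in l, ∀ᵐ u, |F i u| ≤ b u)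
    (hFf : ∀ᵐ u, Tendsto (F · u) l (𝓝 (f u)))
    (hone : n = 0 → Tendsto (F · 1) l (𝓝 (f 1))) :
    Tendsto (fun i ↦ iteratedIntegral n (F i)) l (𝓝 (iteratedIntegral n f)) := by
  cases n with
  | zero => exact hone rfl
  | succ n =>
    refine intervalIntegral.tendsto_integral_filter_of_dominated_convergence b ?_ ?_ hb ?_
    · filter_upwards [hF] with i hi using Continuous.aestronglyMeasurable (by fun_prop)
    · filter_upwards [hFb] with i hi
      filter_upwards [hi] with u hu hu01
      exact (abs_one_sub_pow_div_factorial_mul_le n (uIoc_zero_one_subset_Icc hu01) _).trans hu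
    · filter_upwards [hFf] with u hu _ using hu.const_mul _

end IteratedIntegral

section Taylor

open scoped Nat

lemma mul_iteratedIntegral_cos (n : ℕ) (a : ℝ) :
    a * iteratedIntegral (n + 1) (fun u ↦ Real.cos (a * u)) =
      iteratedIntegral n fun u ↦ Real.sin (a * u) := by
  have hderiv (u : ℝ) : HasDerivAt (fun u ↦ Real.sin (a * u)) (a * Real.cos (a * u)) u := by
    simpa [mul_comm] using ((hasDerivAt_id u).const_mul a).sin
  rw [← iteratedIntegral_const_mul, iteratedIntegral_succ_deriv n (fun u _ ↦ hderiv u)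
    (Continuous.intervalIntegrable (by fun_prop) 0 1)]
  simp

lemma mul_iteratedIntegral_sin (n : ℕ) (a : ℝ) :
    a * iteratedIntegral (n + 1) (fun u ↦ Real.sin (a * u)) =
      1 / (n ! : ℝ) - iteratedIntegral n fun u ↦ Real.cos (a * u) := by
  have hderiv (u : ℝ) : HasDerivAt (fun u ↦ Real.cos (a * u)) (-a * Real.sin (a * u)) u := by
    simpa [mul_comm] using ((hasDerivAt_id u).const_mul a).cos
  rw [← neg_neg (a * _), ← neg_mul, ← iteratedIntegral_const_mul,
    iteratedIntegral_succ_deriv n (fun u _ ↦ hderiv u)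
      (Continuous.intervalIntegrable (by fun_prop) 0 1)]
  simp

lemma cos_eq_sum_add_iteratedIntegral (k : ℕ) (a : ℝ) :
    Real.cos a = ∑ i ∈ Finset.range k, (-1) ^ i / (2 * i)! * a ^ (2 * i) +
      (-1) ^ k * a ^ (2 * k) * iteratedIntegral (2 * k) fun u ↦ Real.cos (a * u) := by
  induction k with
  | zero => simp [iteratedIntegral]
  | succ k ih =>
    have hstep : a ^ 2 * iteratedIntegral (2 * k + 2) (fun u ↦ Real.cos (a * u)) =
        1 / ((2 * k)! : ℝ) - iteratedIntegral (2 * k) fun u ↦ Real.cos (a * u) := by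
      rw [sq, mul_assoc, mul_iteratedIntegral_cos, mul_iteratedIntegral_sin]
    rw [ih, Finset.sum_range_succ, mul_add_one, pow_add a]
    linear_combination (-1) ^ k * a ^ (2 * k) * hstep

lemma abs_mul_abs_iteratedIntegral_cos_le (n : ℕ) (a : ℝ) :
    |a| * |iteratedIntegral (n + 1) fun u ↦ Real.cos (a * u)| ≤ 1 := by
  rw [← abs_mul, mul_iteratedIntegral_cos]
  exact abs_iteratedIntegral_le n fun u _ ↦ Real.abs_sin_le_one _

end Taylor

section LogSine

open MeasureTheory
open scoped Topology

lemma norm_one_sub_exp_mul_I (t : ℝ) : ‖1 - Complex.exp (t * I)‖ = |2 * Real.sin (t / 2)| := by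
  rw [norm_sub_rev, mul_comm, Complex.norm_exp_I_mul_ofReal_sub_one, Real.norm_eq_abs]

lemma exp_mul_I_pow_re (t : ℝ) (n : ℕ) : (Complex.exp (t * I) ^ n).re = Real.cos (n * t) := by
  rw [← Complex.exp_nat_mul, ← mul_assoc, ← Complex.ofReal_natCast, ← Complex.ofReal_mul,
    Complex.exp_ofReal_mul_I_re]

lemma hasSum_pow_mul_cos_div (t : ℝ) {r : ℝ} (hr0 : 0 ≤ r) (hr1 : r < 1) :
    HasSum (fun j : ℕ ↦ r ^ (j + 1) * (Real.cos ((j + 1) * t) / (j + 1)))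
      (-Real.log ‖1 - r * Complex.exp (t * I)‖) := by
  have hz : ‖(r * Complex.exp (t * I) : ℂ)‖ < 1 := by
    rwa [norm_mul, Complex.norm_exp_ofReal_mul_I, mul_one, Complex.norm_of_nonneg hr0]
  have hlog := Complex.hasSum_re <|
    (hasSum_nat_add_iff' 1).2 (Complex.hasSum_taylorSeries_neg_log hz)
  simp only [Finset.range_one, Finset.sum_singleton, Nat.cast_zero, div_zero, sub_zero,
    Complex.neg_re, Complex.log_re] at hlog
  convert! hlog using 2 with j
  rw [mul_pow, ← Complex.ofReal_pow, Complex.div_natCast_re, Complex.re_ofReal_mul,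
    exp_mul_I_pow_re, mul_div_assoc]
  push_cast
  rfl

lemma norm_one_sub_le_two_mul_norm_one_sub_mul {z : ℂ} (hz : ‖z‖ = 1) {r : ℝ}
    (hr : r ∈ Set.Icc (0 : ℝ) 1) : ‖1 - z‖ ≤ 2 * ‖1 - r * z‖ := by
  have hdist : ‖(r : ℂ) * z - z‖ = 1 - ‖(r : ℂ) * z‖ := by
    rw [← sub_one_mul, norm_mul, norm_mul, hz, ← Complex.ofReal_one, ← Complex.ofReal_sub,
      Complex.norm_real, Complex.norm_of_nonneg hr.1, Real.norm_of_nonpos (by linarith [hr.2])]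
    ring
  have hreverse : 1 - ‖(r : ℂ) * z‖ ≤ ‖1 - r * z‖ := by
    simpa using norm_sub_norm_le (1 : ℂ) (r * z)
  linarith [norm_sub_le_norm_sub_add_norm_sub 1 ((r : ℂ) * z) z]

lemma abs_log_norm_one_sub_mul_le {z : ℂ} (hz : ‖z‖ = 1) (hz1 : z ≠ 1) {r : ℝ}
    (hr : r ∈ Set.Icc (0 : ℝ) 1) :
    |Real.log ‖1 - r * z‖| ≤ Real.log 2 + |Real.log ‖1 - z‖| := by
  have hpos : 0 < ‖1 - z‖ := norm_pos_iff.2 (sub_ne_zero.2 hz1.symm)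
  have hle := norm_one_sub_le_two_mul_norm_one_sub_mul hz hr
  have hpos' : 0 < ‖1 - r * z‖ := by linarith
  have hlower : Real.log ‖1 - z‖ ≤ Real.log 2 + Real.log ‖1 - r * z‖ := by
    rw [← Real.log_mul two_ne_zero hpos'.ne']
    exact Real.log_le_log hpos hle
  have hupper : Real.log ‖1 - r * z‖ ≤ Real.log 2 := by
    refine Real.log_le_log hpos' ((norm_sub_le _ _).trans ?_)
    rw [norm_one, norm_mul, hz, Complex.norm_of_nonneg hr.1]
    linarith [hr.2]
  rw [abs_le]
  constructor <;> linarith [neg_abs_le (Real.log ‖1 - z‖), abs_nonneg (Real.log ‖1 - z‖)]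

lemma ae_sin_mul_ne_zero {c : ℝ} (hc : c ≠ 0) : ∀ᵐ u : ℝ, Real.sin (c * u) ≠ 0 := by
  filter_upwards [(Set.countable_range fun n : ℤ ↦ n * π / c).ae_notMem volume] with u hu hsin
  obtain ⟨n, hn⟩ := Real.sin_eq_zero_iff.1 hsin
  exact hu ⟨n, by simp only [hn]; field_simp⟩

lemma intervalIntegrable_log_two_mul_sin (c a b : ℝ) :
    IntervalIntegrable (fun u ↦ Real.log (2 * Real.sin (c * u))) volume a b := by
  refine MeromorphicOn.intervalIntegrable_log fun u _ ↦ AnalyticAt.meromorphicAt ?_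
  fun_prop

lemma tendsto_sum_range_of_tendsto_tsum_pow {a : ℕ → ℝ} {F : ℝ → ℝ} {L : ℝ}
    (ha : CauchySeq fun N ↦ ∑ j ∈ Finset.range N, a j)
    (hF : ∀ r ∈ Set.Ioo (0 : ℝ) 1, HasSum (fun j ↦ r ^ (j + 1) * a j) (F r))
    (hL : Tendsto F (𝓝[<] 1) (𝓝 L)) :
    Tendsto (fun N ↦ ∑ j ∈ Finset.range N, a j) atTop (𝓝 L) := by
  obtain ⟨l, hl⟩ := cauchySeq_tendsto_of_complete ha
  have habel : Tendsto (fun r : ℝ ↦ r * ∑' j, a j * r ^ j) (𝓝[<] 1) (𝓝 l) := by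
    simpa using (tendsto_id.mono_left nhdsWithin_le_nhds).mul
      (Real.tendsto_tsum_powerSeries_nhdsWithin_lt hl)
  have hFl : Tendsto F (𝓝[<] 1) (𝓝 l) := by
    refine habel.congr' ?_
    filter_upwards [Ioo_mem_nhdsLT zero_lt_one] with r hr
    rw [← (hF r hr).tsum_eq, ← tsum_mul_left]
    exact tsum_congr fun j ↦ by ring
  rwa [tendsto_nhds_unique hL hFl]

lemma norm_sum_pow_succ_le {z : ℂ} (hz : ‖z‖ = 1) (hz1 : z ≠ 1) (N : ℕ) :
    ‖∑ j ∈ Finset.range N, z ^ (j + 1)‖ ≤ 2 / ‖z - 1‖ := by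
  simp_rw [pow_succ]
  rw [← Finset.sum_mul, geom_sum_eq hz1, norm_mul, norm_div, hz, mul_one]
  gcongr
  refine (norm_sub_le _ _).trans ?_
  rw [norm_pow, hz]
  norm_num

lemma exp_mul_I_ne_one {t : ℝ} (ht : Real.sin (t / 2) ≠ 0) : Complex.exp (t * I) ≠ 1 := fun h ↦
  ht <| by simpa [h] using (norm_one_sub_exp_mul_I t).symm

lemma cauchySeq_sum_cos_div {t : ℝ} (ht : Real.sin (t / 2) ≠ 0) :
    CauchySeq fun N ↦ ∑ j ∈ Finset.range N, Real.cos ((j + 1) * t) / (j + 1) := by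
  have hbound (N : ℕ) : ‖∑ j ∈ Finset.range N, Real.cos ((j + 1) * t)‖ ≤
      2 / ‖Complex.exp (t * I) - 1‖ := by
    refine le_trans ?_ (norm_sum_pow_succ_le (norm_exp_ofReal_mul_I t) (exp_mul_I_ne_one ht) N)
    simpa [exp_mul_I_pow_re] using
      Complex.abs_re_le_norm (∑ j ∈ Finset.range N, Complex.exp (t * I) ^ (j + 1))
  have hanti : Antitone fun j : ℕ ↦ 1 / ((j : ℝ) + 1) := fun i j hij ↦
    Nat.one_div_le_one_div hij
  simpa only [smul_eq_mul, one_div_mul_eq_div] using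
    hanti.cauchySeq_series_mul_of_tendsto_zero_of_bounded
      tendsto_one_div_add_atTop_nhds_zero_nat hbound

lemma summable_iteratedIntegral_cos_div (n : ℕ) {θ : ℝ} (hθ : θ ≠ 0) :
    Summable fun j : ℕ ↦
      iteratedIntegral (n + 1) (fun u ↦ Real.cos ((j + 1) * θ * u)) / ((j : ℝ) + 1) := by
  have hsq : Summable fun j : ℕ ↦ |θ|⁻¹ * (1 / ((j : ℝ) + 1) ^ 2) := by
    simpa using ((summable_nat_add_iff 1).2
      (Real.summable_one_div_nat_pow.2 one_lt_two)).mul_left |θ|⁻¹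
  refine hsq.of_norm_bounded fun j ↦ ?_
  have hj : (0 : ℝ) < j + 1 := j.cast_add_one_pos
  have hdecay := abs_mul_abs_iteratedIntegral_cos_le n ((j + 1) * θ)
  rw [abs_mul, abs_of_pos hj] at hdecay
  have hθ' : 0 < |θ| := abs_pos.2 hθ
  rw [norm_div, Real.norm_eq_abs, Real.norm_of_nonneg hj.le, div_le_iff₀ hj]
  field_simp
  linarith

lemma cauchySeq_sum_iteratedIntegral_cos_div (n : ℕ) {c : ℝ} (hc : c ≠ 0)
    (hcn : Real.sin c ≠ 0 ∨ n ≠ 0) :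
    CauchySeq fun N ↦ ∑ j ∈ Finset.range N,
      iteratedIntegral n (fun u ↦ Real.cos ((j + 1) * (2 * c) * u)) / ((j : ℝ) + 1) := by
  cases n with
  | zero =>
    have hsin : Real.sin (2 * c / 2) ≠ 0 := by simpa using hcn
    simpa [iteratedIntegral] using cauchySeq_sum_cos_div hsin
  | succ n =>
    exact (summable_iteratedIntegral_cos_div n (by positivity)).hasSum.tendsto_sum_nat.cauchySeq

lemma hasSum_pow_mul_iteratedIntegral_cos_div (n : ℕ) (θ : ℝ) {r : ℝ} (hr0 : 0 ≤ r) (hr1 : r < 1) :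
    HasSum (fun j : ℕ ↦ r ^ (j + 1) *
        (iteratedIntegral n (fun u ↦ Real.cos ((j + 1) * θ * u)) / (j + 1)))
      (iteratedIntegral n fun u ↦ -Real.log ‖1 - r * Complex.exp ((θ * u : ℝ) * I)‖) := by
  have hgeom : Summable fun j : ℕ ↦ r ^ (j + 1) :=
    (summable_nat_add_iff 1).2 (summable_geometric_of_lt_one hr0 hr1)
  have hsum := hasSum_iteratedIntegral n
    (F := fun j u ↦ r ^ (j + 1) / (j + 1) * Real.cos ((j + 1) * θ * u))
    (fun j ↦ by fun_prop) hgeom (fun j u _ ↦ ?_)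
    (fun u _ ↦ by
      simpa only [mul_assoc, mul_div_left_comm, mul_comm_div] using
        hasSum_pow_mul_cos_div (θ * u) hr0 hr1)
  · simp only [iteratedIntegral_const_mul] at hsum
    simpa only [div_mul_eq_mul_div, mul_div_assoc] using hsum
  · rw [abs_mul, abs_of_nonneg (by positivity)]
    refine (mul_le_of_le_one_right (by positivity) (Real.abs_cos_le_one _)).trans ?_
    exact div_le_self (by positivity) (by simp)

lemma tendsto_log_norm_one_sub_mul {z : ℂ} (hz : z ≠ 1) :
    Tendsto (fun r : ℝ ↦ -Real.log ‖1 - r * z‖) (𝓝[<] 1) (𝓝 (-Real.log ‖1 - z‖)) := by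
  have hcont : ContinuousAt (fun r : ℝ ↦ -Real.log ‖1 - r * z‖) 1 := by
    refine (ContinuousAt.log (by fun_prop) ?_).neg
    simpa [sub_eq_zero] using hz.symm
  simpa using hcont.tendsto.mono_left nhdsWithin_le_nhds

lemma continuous_log_norm_one_sub_mul_exp {r : ℝ} (hr : |r| < 1) (θ : ℝ) :
    Continuous fun u : ℝ ↦ Real.log ‖1 - r * Complex.exp ((θ * u : ℝ) * I)‖ := by
  refine Continuous.log (by fun_prop) fun u ↦ norm_ne_zero_iff.2 <| sub_ne_zero.2 fun h ↦ hr.ne ?_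
  rw [← norm_one (α := ℂ), h, norm_mul, norm_exp_ofReal_mul_I, Complex.norm_real, mul_one,
    Real.norm_eq_abs]

lemma log_norm_one_sub_exp_mul_I (t : ℝ) :
    Real.log ‖1 - Complex.exp (t * I)‖ = Real.log (2 * Real.sin (t / 2)) := by
  rw [norm_one_sub_exp_mul_I, Real.log_abs]

lemma tendsto_iteratedIntegral_log_norm (n : ℕ) {c : ℝ} (hc : c ≠ 0)
    (hcn : Real.sin c ≠ 0 ∨ n ≠ 0) :
    Tendsto (fun r : ℝ ↦
        iteratedIntegral n fun u ↦ -Real.log ‖1 - r * Complex.exp ((2 * c * u : ℝ) * I)‖)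
      (𝓝[<] 1) (𝓝 (-iteratedIntegral n fun u ↦ Real.log (2 * Real.sin (c * u)))) := by
  have hhalf (u : ℝ) : 2 * c * u / 2 = c * u := by ring
  have hne (u : ℝ) (hu : Real.sin (c * u) ≠ 0) : Complex.exp ((2 * c * u : ℝ) * I) ≠ 1 :=
    exp_mul_I_ne_one (by rwa [hhalf])
  have hlim (u : ℝ) (hu : Real.sin (c * u) ≠ 0) : Tendsto
      (fun r : ℝ ↦ -Real.log ‖1 - r * Complex.exp ((2 * c * u : ℝ) * I)‖) (𝓝[<] 1)
      (𝓝 (-1 * Real.log (2 * Real.sin (c * u)))) := by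
    rw [neg_one_mul, ← hhalf, ← log_norm_one_sub_exp_mul_I]
    exact tendsto_log_norm_one_sub_mul (hne u hu)
  rw [← neg_one_mul, ← iteratedIntegral_const_mul]
  have hmem : Set.Ioo (0 : ℝ) 1 ∈ 𝓝[<] 1 := Ioo_mem_nhdsLT zero_lt_one
  refine tendsto_iteratedIntegral
    (b := fun u ↦ Real.log 2 + |Real.log (2 * Real.sin (c * u))|) ?_ ?_ ?_ ?_ ?_
  · filter_upwards [hmem] with r hr
    exact (continuous_log_norm_one_sub_mul_exp (abs_lt.2 ⟨by linarith [hr.1], hr.2⟩) _).neg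
  · exact intervalIntegrable_const.add (intervalIntegrable_log_two_mul_sin c 0 1).abs
  · filter_upwards [hmem] with r hr
    filter_upwards [ae_sin_mul_ne_zero hc] with u hu
    rw [abs_neg, ← hhalf, ← log_norm_one_sub_exp_mul_I]
    exact abs_log_norm_one_sub_mul_le (norm_exp_ofReal_mul_I _) (hne u hu) ⟨hr.1.le, hr.2.le⟩
  · filter_upwards [ae_sin_mul_ne_zero hc] with u hu using hlim u hu
  · exact fun hn ↦ hlim 1 (by simpa [hn] using hcn)

lemma tendsto_sum_iteratedIntegral_cos_div (n : ℕ) {c : ℝ} (hc : c ≠ 0)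
    (hcn : Real.sin c ≠ 0 ∨ n ≠ 0) :
    Tendsto (fun N ↦ ∑ j ∈ Finset.range N,
        iteratedIntegral n (fun u ↦ Real.cos ((j + 1) * (2 * c) * u)) / ((j : ℝ) + 1)) atTop
      (𝓝 (-iteratedIntegral n fun u ↦ Real.log (2 * Real.sin (c * u)))) :=
  tendsto_sum_range_of_tendsto_tsum_pow (cauchySeq_sum_iteratedIntegral_cos_div n hc hcn)
    (fun _ hr ↦ hasSum_pow_mul_iteratedIntegral_cos_div n (2 * c) hr.1.le hr.2)
    (tendsto_iteratedIntegral_log_norm n hc hcn)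

end LogSine

section CosineSeries

open scoped Topology Nat

lemma hasSum_one_div_add_one_pow {p : ℕ} (hp : 1 < p) :
    HasSum (fun j : ℕ ↦ ((1 / ((j : ℝ) + 1) ^ p : ℝ) : ℂ)) (riemannZeta p) := by
  have hsummable : Summable fun j : ℕ ↦ 1 / ((j : ℝ) + 1) ^ p := by
    simpa using (summable_nat_add_iff 1).2 (Real.summable_one_div_nat_pow.2 hp)
  convert! (Complex.hasSum_ofReal.2 hsummable.hasSum) using 1
  rw [zeta_eq_tsum_one_div_nat_add_one_cpow (by simpa using hp), Complex.ofReal_tsum]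
  exact tsum_congr fun j ↦ by simp

lemma sum_range_sub_eq_sum_Icc {M : Type*} [AddCommMonoid M] (f : ℕ → ℕ → M) (k : ℕ) :
    ∑ i ∈ Finset.range k, f i (k - i) = ∑ j ∈ Finset.Icc 1 k, f (k - j) j := by
  refine Finset.sum_nbij' (k - ·) (k - ·) ?_ ?_ ?_ ?_ ?_ <;>
    simp only [Finset.mem_range, Finset.mem_Icc] <;> intro i hi <;> grind

lemma cos_div_pow_eq_sum_add (k : ℕ) (θ : ℝ) {x : ℝ} (hx : x ≠ 0) :
    Real.cos (x * θ) / x ^ (2 * k + 1) =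
      ∑ i ∈ Finset.range k, (-1) ^ i / (2 * i)! * θ ^ (2 * i) * (1 / x ^ (2 * (k - i) + 1)) +
        (-1) ^ k * θ ^ (2 * k) * (iteratedIntegral (2 * k) (fun u ↦ Real.cos (x * θ * u)) / x) := by
  rw [cos_eq_sum_add_iteratedIntegral k (x * θ), add_div, Finset.sum_div]
  congr 1
  · refine Finset.sum_congr rfl fun i hi ↦ ?_
    have hpow : x ^ (2 * k + 1) = x ^ (2 * i) * x ^ (2 * (k - i) + 1) := by
      rw [← pow_add]
      grind
    rw [hpow, mul_pow]
    field_simp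
  · rw [mul_pow, pow_succ]
    field_simp

lemma tendsto_sum_cos_div_pow (k : ℕ) {c : ℝ} (hc : c ≠ 0) (hck : Real.sin c ≠ 0 ∨ k ≠ 0) :
    Tendsto (fun N ↦ ((∑ j ∈ Finset.range N,
        Real.cos ((j + 1) * (2 * c)) / ((j : ℝ) + 1) ^ (2 * k + 1) : ℝ) : ℂ)) atTop
      (𝓝 (∑ j ∈ Finset.Icc 1 k, (-1) ^ (k - j) / ((2 * k - 2 * j)! : ℂ) *
          ((2 * c : ℝ) : ℂ) ^ (2 * k - 2 * j) * riemannZeta (2 * j + 1) -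
        (((-1) ^ k * (2 * c) ^ (2 * k) *
          iteratedIntegral (2 * k) fun u ↦ Real.log (2 * Real.sin (c * u)) : ℝ) : ℂ))) := by
  have hzeta : HasSum (fun j : ℕ ↦ ∑ i ∈ Finset.range k,
        ((-1) ^ i / (2 * i)! * (2 * c) ^ (2 * i) * (1 / ((j : ℝ) + 1) ^ (2 * (k - i) + 1)) : ℂ))
      (∑ i ∈ Finset.range k,
        (-1) ^ i / (2 * i)! * (2 * c) ^ (2 * i) * riemannZeta (2 * (k - i : ℕ) + 1)) := by
    refine hasSum_sum fun i hi ↦ HasSum.mul_left _ ?_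
    have := Finset.mem_range.1 hi
    exact_mod_cast hasSum_one_div_add_one_pow (p := 2 * (k - i) + 1) (by lia)
  have hremainder := (Complex.continuous_ofReal.tendsto _).comp <|
    (tendsto_sum_iteratedIntegral_cos_div (2 * k) hc (by simpa using hck)).const_mul
      ((-1) ^ k * (2 * c) ^ (2 * k))
  have hsum := hzeta.tendsto_sum_nat.add hremainder
  rw [sum_range_sub_eq_sum_Icc fun i j ↦
    (-1) ^ i / ((2 * i)! : ℂ) * (2 * c) ^ (2 * i) * riemannZeta (2 * j + 1)] at hsum
  convert! hsum using 2 with N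
  · have hterm (j : ℕ) := cos_div_pow_eq_sum_add k (2 * c) (Nat.cast_add_one_ne_zero (R := ℝ) j)
    simp only [hterm, Finset.sum_add_distrib, Finset.mul_sum, Function.comp_apply]
    push_cast
    rfl
  · simp only [Nat.mul_sub, Complex.ofReal_mul, Complex.ofReal_ofNat, mul_neg, Complex.ofReal_neg,
      sub_eq_add_neg]

end CosineSeries

section CotangentIntegral

open MeasureTheory
open scoped Topology Nat

lemma intervalIntegrable_deriv_of_le {g g' h : ℝ → ℝ} {a b : ℝ} (hab : a ≤ b)
    (hg : ContinuousOn g (Set.Icc a b)) (hderiv : ∀ x ∈ Set.Ioo a b, HasDerivAt g (g' x) x)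
    (hh : IntervalIntegrable h volume a b) (hhc : ContinuousOn h (Set.Ioo a b))
    (hle : ∀ x ∈ Set.Ioo a b, g' x ≤ h x) : IntervalIntegrable g' volume a b := by
  have hprimitive : ContinuousOn (fun x ↦ ∫ t in a..x, h t) (Set.uIcc a b) :=
    intervalIntegral.continuousOn_primitive_interval' hh Set.left_mem_uIcc
  have hdiff : IntervalIntegrable (fun x ↦ h x - g' x) volume a b := by
    refine intervalIntegrable_deriv_of_nonneg (g := fun x ↦ (∫ t in a..x, h t) - g x)
      (hprimitive.sub (by rwa [Set.uIcc_of_le hab])) ?_ ?_ <;>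
      rw [min_eq_left hab, max_eq_right hab] <;> intro x hx
    · refine HasDerivAt.sub ?_ (hderiv x hx)
      refine integral_hasDerivAt_right (hh.mono_set ?_)
        (hhc.stronglyMeasurableAtFilter isOpen_Ioo x hx) (hhc.continuousAt (isOpen_Ioo.mem_nhds hx))
      rw [Set.uIcc_of_le hx.1.le, Set.uIcc_of_le hab]
      exact Set.Icc_subset_Icc_right hx.2.le
    · exact sub_nonneg.2 (hle x hx)
  simpa using hh.sub hdiff

lemma mul_sinc (x : ℝ) : x * Real.sinc x = Real.sin x := by
  rcases eq_or_ne x 0 with rfl | hx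
  · simp
  · rw [Real.sinc_of_ne_zero hx, mul_div_cancel₀ _ hx]

lemma sinc_ne_zero_of_abs_lt_pi {x : ℝ} (hx : |x| < π) : Real.sinc x ≠ 0 := by
  rcases eq_or_ne x 0 with rfl | hx0
  · simp
  · rw [abs_lt] at hx
    rw [Real.sinc_of_ne_zero hx0]
    exact div_ne_zero (mt (Real.sin_eq_zero_iff_of_lt_of_lt hx.1 hx.2).1 hx0) hx0

lemma mul_cot_le_one {x : ℝ} (hx : |x| < π) : x * Real.cot x ≤ 1 := by
  wlog hpos : 0 < x generalizing x
  · rcases (not_lt.1 hpos).eq_or_lt with rfl | hneg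
    · simp
    · have hcot : Real.cot (-x) = -Real.cot x := by
        simp [Real.cot_eq_cos_div_sin, div_neg]
      simpa [hcot] using this (x := -x) (by rwa [abs_neg]) (neg_pos.2 hneg)
  rw [abs_of_pos hpos] at hx
  have hsin : 0 < Real.sin x := Real.sin_pos_of_pos_of_lt_pi hpos hx
  rw [Real.cot_eq_cos_div_sin, ← mul_div_assoc, div_le_one hsin]
  rcases lt_or_ge x (π / 2) with hlt | hge
  · have hcos : 0 < Real.cos x := Real.cos_pos_of_mem_Ioo ⟨by linarith, hlt⟩
    rw [← le_div_iff₀ hcos, ← Real.tan_eq_sin_div_cos]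
    exact (Real.lt_tan hpos hlt).le
  · have hcos : Real.cos x ≤ 0 := Real.cos_nonpos_of_pi_div_two_le_of_le hge (by linarith)
    exact (mul_nonpos_of_nonneg_of_nonpos hpos.le hcos).trans hsin.le

lemma abs_mul_lt_pi {a u : ℝ} (ha : |a| ≤ π) (hu : u ∈ Set.Ico (0 : ℝ) 1) : |a * u| < π := by
  rw [abs_mul, abs_of_nonneg hu.1]
  nlinarith [abs_nonneg a, hu.1, hu.2, Real.pi_pos]

lemma sin_mul_ne_zero {a u : ℝ} (ha : a ≠ 0) (haπ : |a| ≤ π) (hu : u ∈ Set.Ioo (0 : ℝ) 1) :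
    Real.sin (a * u) ≠ 0 := by
  rw [← mul_sinc]
  exact mul_ne_zero (mul_ne_zero ha hu.1.ne')
    (sinc_ne_zero_of_abs_lt_pi (abs_mul_lt_pi haπ (Set.Ioo_subset_Ico_self hu)))

lemma log_two_mul_sin_mul {a u : ℝ} (ha : a ≠ 0) (hu : u ≠ 0) (hsinc : Real.sinc (a * u) ≠ 0) :
    Real.log (2 * Real.sin (a * u)) = Real.log u + Real.log (2 * a * Real.sinc (a * u)) := by
  rw [← Real.log_mul hu (by positivity), ← mul_sinc]
  ring_nf

lemma continuousAt_log_two_mul_sinc {a u : ℝ} (ha : a ≠ 0) (hsinc : Real.sinc (a * u) ≠ 0) :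
    ContinuousAt (fun u ↦ Real.log (2 * a * Real.sinc (a * u))) u := by
  have := Real.continuous_sinc
  exact ContinuousAt.log (by fun_prop) (by positivity)

lemma continuousAt_mul_log_two_mul_sin_zero {a : ℝ} (ha : a ≠ 0) :
    ContinuousAt (fun u ↦ u * Real.log (2 * Real.sin (a * u))) 0 := by
  have hcont : ContinuousAt (fun u ↦ u * Real.log u + u * Real.log (2 * a * Real.sinc (a * u))) 0 :=
    Real.continuous_mul_log.continuousAt.add
      (continuousAt_id.mul (continuousAt_log_two_mul_sinc ha (by simp)))
  refine hcont.congr ?_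
  have hsinc : ∀ᶠ u in 𝓝 (0 : ℝ), Real.sinc (a * u) ≠ 0 :=
    (Real.continuous_sinc.comp (continuous_const_mul a)).continuousAt.eventually_ne (by simp)
  filter_upwards [hsinc] with u hu
  rcases eq_or_ne u 0 with rfl | hu0
  · simp
  · rw [log_two_mul_sin_mul ha hu0 hu, mul_add]

lemma continuousAt_one_sub_pow_mul_log_two_mul_sin_one {n : ℕ} {a : ℝ} (ha : a ≠ 0)
    (han : Real.sin a ≠ 0 ∨ n ≠ 0) :
    ContinuousAt (fun u ↦ (1 - u) ^ n * Real.log (2 * Real.sin (a * u))) 1 := by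
  by_cases hsin : Real.sin a = 0
  · obtain ⟨n, rfl⟩ := Nat.exists_eq_succ_of_ne_zero (han.resolve_left (not_not.2 hsin))
    have hcos : |Real.cos a| = 1 := by
      rcases Real.sin_eq_zero_iff_cos_eq.1 hsin with h | h <;> simp [h]
    have hreflect (u : ℝ) : |2 * Real.sin (a * u)| = |2 * Real.sin (a * (1 - u))| := by
      rw [mul_one_sub, Real.sin_sub, hsin, zero_mul, zero_sub, abs_mul, abs_mul, abs_neg, abs_mul,
        hcos, one_mul]
    have hcont : ContinuousAt
        (fun u ↦ (1 - u) ^ n * ((1 - u) * Real.log (2 * Real.sin (a * (1 - u))))) 1 := by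
      refine ContinuousAt.mul (by fun_prop) ?_
      exact ContinuousAt.comp' (g := fun v ↦ v * Real.log (2 * Real.sin (a * v)))
        (by simpa using continuousAt_mul_log_two_mul_sin_zero ha) (by fun_prop)
    convert! hcont using 2 with u
    rw [← Real.log_abs, hreflect, Real.log_abs, pow_succ, mul_assoc]
  · exact ContinuousAt.mul (by fun_prop) (ContinuousAt.log (by fun_prop) (by simpa using hsin))

lemma continuous_one_sub_pow_sub_one_mul_log (n : ℕ) :
    Continuous fun u : ℝ ↦ ((1 - u) ^ n - 1) * Real.log u := by
  have hgeom (u : ℝ) : ((1 - u) ^ n - 1) * Real.log u =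
      -(∑ i ∈ Finset.range n, (1 - u) ^ i) * (u * Real.log u) := by
    linear_combination Real.log u * mul_neg_geom_sum (1 - u) n
  simp only [hgeom]
  exact Continuous.mul (by fun_prop) Real.continuous_mul_log

/-- The function `(1 - u) ^ n * log (2 * sin (a * u)) - log u` on `(0, 1]`, with `log u` split off
from the first logarithm so that the value at `u = 0` is the limit `log (2 * a)` and not an artefact
of `log 0 = 0`. -/
noncomputable def regularizedLogSine (n : ℕ) (a u : ℝ) : ℝ :=
  (1 - u) ^ n * Real.log (2 * a * Real.sinc (a * u)) + ((1 - u) ^ n - 1) * Real.log u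

lemma regularizedLogSine_zero (n : ℕ) (a : ℝ) : regularizedLogSine n a 0 = Real.log (2 * a) := by
  simp [regularizedLogSine]

lemma regularizedLogSine_of_mem_Ioc (n : ℕ) {a u : ℝ} (ha : a ≠ 0) (haπ : |a| ≤ π)
    (hu : u ∈ Set.Ioc (0 : ℝ) 1) : regularizedLogSine n a u =
      (1 - u) ^ n * Real.log (2 * Real.sin (a * u)) - Real.log u := by
  rcases hu.2.eq_or_lt with rfl | hu1
  · simp [regularizedLogSine, mul_assoc, mul_sinc]
  · rw [regularizedLogSine, log_two_mul_sin_mul ha hu.1.ne'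
      (sinc_ne_zero_of_abs_lt_pi (abs_mul_lt_pi haπ ⟨hu.1.le, hu1⟩))]
    ring

lemma continuousOn_regularizedLogSine {n : ℕ} {a : ℝ} (ha : a ≠ 0) (haπ : |a| ≤ π)
    (han : Real.sin a ≠ 0 ∨ n ≠ 0) : ContinuousOn (regularizedLogSine n a) (Set.Icc 0 1) := by
  intro u hu
  rcases hu.2.eq_or_lt with rfl | hu1
  · have hcont : ContinuousAt
        (fun u ↦ (1 - u) ^ n * Real.log (2 * Real.sin (a * u)) - Real.log u) 1 :=
      (continuousAt_one_sub_pow_mul_log_two_mul_sin_one ha han).sub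
        (Real.continuousAt_log one_ne_zero)
    refine hcont.continuousWithinAt.congr_of_eventuallyEq_of_mem ?_ hu
    filter_upwards [self_mem_nhdsWithin, nhdsWithin_le_nhds (lt_mem_nhds zero_lt_one)] with v hv hv0
    exact regularizedLogSine_of_mem_Ioc n ha haπ ⟨hv0, hv.2⟩
  · have hsinc := sinc_ne_zero_of_abs_lt_pi (abs_mul_lt_pi haπ ⟨hu.1, hu1⟩)
    exact ((ContinuousAt.mul (by fun_prop) (continuousAt_log_two_mul_sinc ha hsinc)).add
      (continuous_one_sub_pow_sub_one_mul_log n).continuousAt).continuousWithinAt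

lemma hasDerivAt_regularizedLogSine (n : ℕ) {a u : ℝ} (ha : a ≠ 0) (haπ : |a| ≤ π)
    (hu : u ∈ Set.Ioo (0 : ℝ) 1) :
    HasDerivAt (regularizedLogSine n a) (a * (1 - u) ^ n * Real.cot (a * u) - u⁻¹ -
      n * ((1 - u) ^ (n - 1) * Real.log (2 * Real.sin (a * u)))) u := by
  have hsin := sin_mul_ne_zero ha haπ hu
  have hlogsin : HasDerivAt (fun u ↦ Real.log (2 * Real.sin (a * u))) (a * Real.cot (a * u)) u := by
    have hsine := ((hasDerivAt_id u).const_mul a).sin.const_mul 2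
    refine (hsine.log (by simpa using hsin)).congr_deriv ?_
    rw [Real.cot_eq_cos_div_sin]
    simp only [id]
    field_simp
  have hderiv := ((((hasDerivAt_id u).const_sub 1).pow n).mul hlogsin).sub
    (Real.hasDerivAt_log hu.1.ne')
  refine (hderiv.congr_of_eventuallyEq ?_).congr_deriv ?_
  · filter_upwards [isOpen_Ioo.mem_nhds hu] with v hv
    exact regularizedLogSine_of_mem_Ioc n ha haπ (Set.Ioo_subset_Ioc_self hv)
  · simp only [id, Pi.pow_apply]
    ring

lemma mul_one_sub_pow_mul_cot_le_inv (n : ℕ) {a u : ℝ} (haπ : |a| ≤ π)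
    (hu : u ∈ Set.Ioo (0 : ℝ) 1) : a * (1 - u) ^ n * Real.cot (a * u) ≤ u⁻¹ := by
  rw [← one_div, le_div_iff₀ hu.1]
  have hcot := mul_cot_le_one (abs_mul_lt_pi haπ (Set.Ioo_subset_Ico_self hu))
  have hweight : (1 - u) ^ n ∈ Set.Icc (0 : ℝ) 1 :=
    ⟨pow_nonneg (by linarith [hu.2]) n, pow_le_one₀ (by linarith [hu.2]) (by linarith [hu.1])⟩
  nlinarith [hweight.1, hweight.2]

lemma intervalIntegrable_one_sub_pow_mul_log_two_mul_sin (n : ℕ) (a : ℝ) :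
    IntervalIntegrable (fun u ↦ (1 - u) ^ n * Real.log (2 * Real.sin (a * u))) volume 0 1 :=
  (intervalIntegrable_log_two_mul_sin a 0 1).continuousOn_mul (by fun_prop)

lemma intervalIntegrable_mul_cot_sub_inv {n : ℕ} {a : ℝ} (ha : a ≠ 0) (haπ : |a| ≤ π)
    (han : Real.sin a ≠ 0 ∨ n ≠ 0) :
    IntervalIntegrable (fun u ↦ a * (1 - u) ^ n * Real.cot (a * u) - u⁻¹) volume 0 1 := by
  have hlog := (intervalIntegrable_one_sub_pow_mul_log_two_mul_sin (n - 1) a).const_mul (n : ℝ)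
  have hderiv := intervalIntegrable_deriv_of_le zero_le_one
    (continuousOn_regularizedLogSine ha haπ han)
    (fun u hu ↦ hasDerivAt_regularizedLogSine n ha haπ hu) hlog.neg
    (ContinuousOn.neg <| continuousOn_const.mul <| ContinuousOn.mul (by fun_prop) <|
      ContinuousOn.log (by fun_prop) fun u hu ↦
        mul_ne_zero two_ne_zero (sin_mul_ne_zero ha haπ hu))
    (fun u hu ↦ ?_)
  · simpa using hderiv.add hlog
  · have := mul_one_sub_pow_mul_cot_le_inv n haπ hu
    simp only [Pi.neg_apply]
    linarith

lemma integral_mul_cot_sub_inv {n : ℕ} {a : ℝ} (ha : a ≠ 0) (haπ : |a| ≤ π)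
    (han : Real.sin a ≠ 0 ∨ n ≠ 0) :
    ∫ u in (0 : ℝ)..1, (a * (1 - u) ^ n * Real.cot (a * u) - u⁻¹) =
      n ! * iteratedIntegral n (fun u ↦ Real.log (2 * Real.sin (a * u))) - Real.log (2 * a) := by
  have hcot := intervalIntegrable_mul_cot_sub_inv ha haπ han
  have hlog := (intervalIntegrable_one_sub_pow_mul_log_two_mul_sin (n - 1) a).const_mul (n : ℝ)
  have hftc := integral_eq_sub_of_hasDerivAt_of_le zero_le_one
    (continuousOn_regularizedLogSine ha haπ han)
    (fun u hu ↦ hasDerivAt_regularizedLogSine n ha haπ hu) (hcot.sub hlog)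
  rw [intervalIntegral.integral_sub hcot hlog, intervalIntegral.integral_const_mul,
    regularizedLogSine_zero,
    regularizedLogSine_of_mem_Ioc n ha haπ (Set.right_mem_Ioc.2 zero_lt_one), sub_self, mul_one,
    Real.log_one, sub_zero] at hftc
  rw [factorial_mul_iteratedIntegral, mul_one]
  linear_combination hftc

lemma iteratedIntegral_one_log_two_mul_sin_pi :
    iteratedIntegral 1 (fun u ↦ Real.log (2 * Real.sin (π * u))) = 0 := by
  have hcos (j : ℕ) : iteratedIntegral 1 (fun u ↦ Real.cos ((j + 1) * (2 * π) * u)) = 0 := by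
    have hsin : Real.sin ((j + 1) * (2 * π)) = 0 := by
      simpa using Real.sin_periodic.nat_mul_eq (j + 1)
    have hmul : (j + 1) * (2 * π) * _ = Real.sin ((j + 1) * (2 * π) * 1) :=
      mul_iteratedIntegral_cos 0 _
    rw [mul_one, hsin] at hmul
    exact (mul_eq_zero.1 hmul).resolve_left (by positivity)
  have hlim := tendsto_sum_iteratedIntegral_cos_div 1 Real.pi_ne_zero (.inr one_ne_zero)
  simp only [hcos, zero_div, Finset.sum_const_zero] at hlim
  exact neg_eq_zero.1 (tendsto_nhds_unique hlim tendsto_const_nhds)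

lemma mul_integral_cot_sub_cot {n : ℕ} {c : ℝ} (hc : c ≠ 0) (hcπ : |c| ≤ π)
    (hcn : Real.sin c ≠ 0 ∨ n ≠ 0) :
    c * ∫ u in (0 : ℝ)..1, ((1 - u) ^ n * Real.cot (c * u) - π / c * (1 - u) * Real.cot (π * u)) =
      Real.log (π / c) + n ! * iteratedIntegral n fun u ↦ Real.log (2 * Real.sin (c * u)) := by
  have hπ : |π| ≤ π := (abs_of_pos Real.pi_pos).le
  have hsplit := intervalIntegral.integral_sub (intervalIntegrable_mul_cot_sub_inv hc hcπ hcn)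
    (intervalIntegrable_mul_cot_sub_inv (n := 1) Real.pi_ne_zero hπ (.inr one_ne_zero))
  rw [integral_mul_cot_sub_inv hc hcπ hcn,
    integral_mul_cot_sub_inv (n := 1) Real.pi_ne_zero hπ (.inr one_ne_zero),
    iteratedIntegral_one_log_two_mul_sin_pi] at hsplit
  have hlog : Real.log (π / c) = Real.log (2 * π) - Real.log (2 * c) := by
    rw [← Real.log_div (by positivity) (by positivity), mul_div_mul_left _ _ two_ne_zero]
  rw [← intervalIntegral.integral_const_mul, hlog]
  convert! hsplit using 1
  · congr 1 with u
    field_simp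
    ring
  · ring

end CotangentIntegral

lemma abs_pi_div_lt_pi {m : ℝ} (hm : 1 < |m|) : |π / m| < π := by
  rw [abs_div, abs_of_pos Real.pi_pos]
  exact div_lt_self Real.pi_pos hm

lemma sin_pi_div_ne_zero {m : ℝ} (hm : 1 < |m|) : Real.sin (π / m) ≠ 0 := by
  have hm0 : m ≠ 0 := abs_pos.1 (zero_lt_one.trans hm)
  rw [← mul_sinc]
  exact mul_ne_zero (div_ne_zero Real.pi_ne_zero hm0)
    (sinc_ne_zero_of_abs_lt_pi (abs_pi_div_lt_pi hm))

theorem cos_fourier_series_odd (k : ℕ) (m : ℝ)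
    (hm : 1 < |m| ∨ (|m| = 1 ∧ 1 ≤ k)) :
    Filter.Tendsto
      (fun n : ℕ => ((∑ j ∈ Finset.range n,
        Real.cos (2 * π * (j + 1) / m) / ((j : ℝ) + 1) ^ (2 * k + 1) : ℝ) : ℂ))
      Filter.atTop
      (nhds (
        (∑ j ∈ Finset.Icc 1 k,
          ((-1 : ℂ) ^ (k - j) / (Nat.factorial (2 * k - 2 * j) : ℂ))
            * ((2 * π / m : ℝ) : ℂ) ^ (2 * k - 2 * j) * riemannZeta (2 * j + 1))
        + ((-1 : ℂ) ^ k / (Nat.factorial (2 * k) : ℂ)) * ((2 * π / m : ℝ) : ℂ) ^ (2 * k)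
            * (Real.log |m| : ℝ)
        - ((-1 : ℂ) ^ k / (2 * (Nat.factorial (2 * k) : ℂ)))
            * ((2 * π / m : ℝ) : ℂ) ^ (2 * k + 1)
            * ((∫ u in (0:ℝ)..1,
                ((1 - u) ^ (2 * k) * Real.cot (π * u / m)
                  - m * (1 - u) * Real.cot (π * u)) : ℝ) : ℂ))) := by
  have hm0 : m ≠ 0 := by rintro rfl; norm_num at hm
  have hc : π / m ≠ 0 := div_ne_zero Real.pi_ne_zero hm0
  have hcπ : |π / m| ≤ π := by
    rcases hm with hm | ⟨hm, -⟩
    · exact (abs_pi_div_lt_pi hm).le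
    · rw [abs_div, hm, div_one, abs_of_pos Real.pi_pos]
  have hck : Real.sin (π / m) ≠ 0 ∨ k ≠ 0 :=
    hm.imp sin_pi_div_ne_zero fun h ↦ Nat.one_le_iff_ne_zero.1 h.2
  have hcot := mul_integral_cot_sub_cot (n := 2 * k) hc hcπ (by simpa using hck)
  have hangle (x : ℝ) : 2 * π * x / m = x * (2 * (π / m)) := by ring
  have hfreq : 2 * π / m = 2 * (π / m) := by ring
  simp only [hangle, hfreq, Real.log_abs, mul_div_right_comm π]
  convert! tendsto_sum_cos_div_pow k hc hck using 2
  rw [div_div_cancel₀ Real.pi_ne_zero] at hcot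
  rw [eq_div_of_mul_eq (by positivity) ((mul_comm _ _).trans (eq_sub_of_add_eq' hcot.symm)),
    add_sub_assoc, sub_eq_add_neg _ (Complex.ofReal _)]
  congr 1
  generalize intervalIntegral (E := ℝ) _ _ _ _ = J
  push_cast
  field_simp
  ring
end

section
/- For every integer k ≥ 1 and real b with 0 < b < 1: ((2π)^k/(k−1)!)·ζ(1−k, b) = i^{−k}·Li_k(e^{2πib}) + i^{k}·Li_k(e^{−2πib}), where for k = 1 both polylogarithm values are interpreted via Li_1(z) = −log(1−z). -/
open Real Complex HurwitzZeta

/-- The polylogarithm `Li_k(z) = ∑_{n=1}^∞ z^n/n^k`, with `Li_1(z) = -log (1 - z)`. -/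
noncomputable def polylog (k : ℕ) (z : ℂ) : ℂ :=
  if k = 1 then -Complex.log (1 - z) else ∑' n : ℕ, z ^ (n + 1) / ((n : ℂ) + 1) ^ k

/-!
Hurwitz's functional equation expresses `ζ(1 - k, b)` through the exponential zeta function
`∑ exp(2πibn) n⁻ˢ` at `s = k`, so it is enough to identify that value with a polylogarithm. Only
`k = 1` lies outside the half-plane of absolute convergence. There, for `z = exp(2πib) ≠ 1`, the
Mellin transform of the Bose–Einstein kernel `z e⁻ᵗ / (1 - z e⁻ᵗ)` continues `Γ(s) ∑ zⁿ n⁻ˢ`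
to `0 < re s`, and at `s = 1` it is the integral of an exact derivative, namely that of
`log (1 - z e⁻ᵗ)`.
-/

open Set Filter Topology Asymptotics MeasureTheory

/-- The Bose–Einstein kernel: the generating function `∑ zⁿ e⁻ⁿᵗ` over `n ≥ 1` in closed form. Its
Mellin transform in `t` is `Γ(s) Li_s(z)`. -/
noncomputable def boseKernel (z : ℂ) (t : ℝ) : ℂ :=
  z * (rexp (-t) : ℂ) / (1 - z * (rexp (-t) : ℂ))

section BoseKernel

variable {z : ℂ} {t : ℝ} {s : ℂ}

lemma one_sub_mem_slitPlane (hz : ‖z‖ ≤ 1) (hz1 : z ≠ 1) : 1 - z ∈ slitPlane := by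
  refine mem_slitPlane_iff.mpr (Or.inl ?_)
  rw [sub_re, one_re, sub_pos]
  refine ((re_le_norm z).trans hz).lt_of_ne fun hre => hz1 ?_
  have hnorm : z.re = ‖z‖ := le_antisymm (re_le_norm z) (hz.trans hre.ge)
  rw [eq_coe_norm_of_nonneg (re_eq_norm.mp hnorm), ← hnorm, hre, ofReal_one]

lemma norm_mul_exp_neg_lt_one (hz : ‖z‖ ≤ 1) (ht : 0 < t) : ‖z * (rexp (-t) : ℂ)‖ < 1 := by
  rw [norm_mul, norm_real, norm_of_nonneg (Real.exp_pos _).le]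
  exact mul_lt_one_of_nonneg_of_lt_one_right hz (Real.exp_pos _).le
    (Real.exp_lt_one_iff.mpr (neg_lt_zero.mpr ht))

lemma one_sub_mul_exp_neg_mem_slitPlane (hz : ‖z‖ ≤ 1) (hz1 : z ≠ 1) (ht : 0 ≤ t) :
    1 - z * (rexp (-t) : ℂ) ∈ slitPlane := by
  rcases ht.eq_or_lt with rfl | ht
  · simpa using one_sub_mem_slitPlane hz hz1
  · have hlt := norm_mul_exp_neg_lt_one hz ht
    exact one_sub_mem_slitPlane hlt.le fun h => hlt.ne (by rw [h, norm_one])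

lemma tendsto_one_sub_mul_exp_neg_atTop (z : ℂ) :
    Tendsto (fun t : ℝ => 1 - z * (rexp (-t) : ℂ)) atTop (𝓝 1) := by
  have hexp : Tendsto (fun t : ℝ => (rexp (-t) : ℂ)) atTop (𝓝 0) :=
    mod_cast (continuous_ofReal.tendsto 0).comp Real.tendsto_exp_neg_atTop_nhds_zero
  simpa using (hexp.const_mul z).const_sub 1

lemma hasDerivAt_log_one_sub_mul_exp_neg (hz : ‖z‖ ≤ 1) (hz1 : z ≠ 1) (ht : 0 ≤ t) :
    HasDerivAt (fun t : ℝ => Complex.log (1 - z * (rexp (-t) : ℂ))) (boseKernel z t) t := by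
  have hexp : HasDerivAt (fun t : ℝ => rexp (-t)) (-rexp (-t)) t := by
    simpa using (hasDerivAt_neg t).exp
  have h := ((hexp.ofReal_comp.const_mul z).const_sub 1).clog_real
    (one_sub_mul_exp_neg_mem_slitPlane hz hz1 ht)
  simpa [boseKernel] using h

lemma continuousOn_boseKernel (hz : ‖z‖ ≤ 1) (hz1 : z ≠ 1) :
    ContinuousOn (boseKernel z) (Ici 0) :=
  ContinuousOn.div (by fun_prop) (by fun_prop) fun _ ht =>
    slitPlane_ne_zero (one_sub_mul_exp_neg_mem_slitPlane hz hz1 ht)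

lemma boseKernel_isBigO_exp_neg_atTop (z : ℂ) :
    boseKernel z =O[atTop] fun t => rexp (-1 * t) := by
  have hden : (fun t : ℝ => (1 - z * (rexp (-t) : ℂ))⁻¹) =O[atTop] fun _ => (1 : ℝ) :=
    ((tendsto_one_sub_mul_exp_neg_atTop z).inv₀ one_ne_zero).isBigO_one ℝ
  have hnum : (fun t : ℝ => z * (rexp (-t) : ℂ)) =O[atTop] fun t => rexp (-t) :=
    (isBigO_ofReal_left.mpr (isBigO_refl _ _)).const_mul_left z
  simpa only [boseKernel, div_eq_mul_inv, neg_one_mul, mul_one] using! hnum.mul hden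

lemma boseKernel_isBigO_rpow_zero_nhdsGT (hz : ‖z‖ ≤ 1) (hz1 : z ≠ 1) :
    boseKernel z =O[𝓝[>] 0] fun t => t ^ (-0 : ℝ) := by
  simpa using (((continuousOn_boseKernel hz hz1) 0 self_mem_Ici).mono_left
    (nhdsWithin_mono 0 Ioi_subset_Ici_self)).isBigO_one ℝ

lemma locallyIntegrableOn_boseKernel (hz : ‖z‖ ≤ 1) (hz1 : z ≠ 1) :
    LocallyIntegrableOn (boseKernel z) (Ioi 0) :=
  ((continuousOn_boseKernel hz hz1).mono Ioi_subset_Ici_self).locallyIntegrableOn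
    measurableSet_Ioi

lemma mellinConvergent_boseKernel (hz : ‖z‖ ≤ 1) (hz1 : z ≠ 1) (hs : 0 < s.re) :
    MellinConvergent (boseKernel z) s :=
  mellinConvergent_of_isBigO_rpow_exp one_pos (locallyIntegrableOn_boseKernel hz hz1)
    (boseKernel_isBigO_exp_neg_atTop z) (boseKernel_isBigO_rpow_zero_nhdsGT hz hz1) hs

lemma differentiableAt_mellin_boseKernel (hz : ‖z‖ ≤ 1) (hz1 : z ≠ 1) (hs : 0 < s.re) :
    DifferentiableAt ℂ (mellin (boseKernel z)) s :=
  mellin_differentiableAt_of_isBigO_rpow_exp one_pos (locallyIntegrableOn_boseKernel hz hz1)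
    (boseKernel_isBigO_exp_neg_atTop z) (boseKernel_isBigO_rpow_zero_nhdsGT hz hz1) hs

lemma mellin_boseKernel_one (hz : ‖z‖ ≤ 1) (hz1 : z ≠ 1) :
    mellin (boseKernel z) 1 = -Complex.log (1 - z) := by
  have hint : IntegrableOn (boseKernel z) (Ioi 0) := by
    simpa [MellinConvergent] using mellinConvergent_boseKernel (s := 1) hz hz1 (by simp)
  have hlim : Tendsto (fun t : ℝ => Complex.log (1 - z * (rexp (-t) : ℂ))) atTop (𝓝 0) := by
    simpa using (tendsto_one_sub_mul_exp_neg_atTop z).clog one_mem_slitPlane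
  simpa [mellin] using integral_Ioi_of_hasDerivAt_of_tendsto'
    (fun t ht => hasDerivAt_log_one_sub_mul_exp_neg hz hz1 ht) hint hlim

lemma hasSum_boseKernel (hz : ‖z‖ ≤ 1) (ht : 0 < t) :
    HasSum (fun n : ℕ => z ^ (n + 1) * (rexp (-(n + 1 : ℝ) * t) : ℂ)) (boseKernel z t) := by
  have h := (hasSum_geometric_of_norm_lt_one (norm_mul_exp_neg_lt_one hz ht)).mul_left
    (z * (rexp (-t) : ℂ))
  refine h.congr_fun fun n => ?_
  rw [← pow_succ', mul_pow, ← ofReal_pow, ← Real.exp_nat_mul]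
  push_cast
  ring_nf

lemma hasSum_mellin_boseKernel (hz : ‖z‖ ≤ 1) (hs : 1 < s.re) :
    HasSum (fun n : ℕ => Complex.Gamma s * (z ^ (n + 1) / ((n : ℂ) + 1) ^ s))
      (mellin (boseKernel z) s) := by
  have hsum : Summable fun n : ℕ => ‖z ^ (n + 1)‖ / (n + 1 : ℝ) ^ s.re := by
    have hzeta : Summable fun n : ℕ => 1 / ((n + 1 : ℕ) : ℝ) ^ s.re :=
      (summable_nat_add_iff 1).mpr (Real.summable_one_div_nat_rpow.mpr hs)
    refine hzeta.of_nonneg_of_le (fun n => by positivity) fun n => ?_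
    rw [norm_pow, Nat.cast_succ]
    gcongr
    exact pow_le_one₀ (norm_nonneg z) hz
  simpa [mul_div_assoc] using hasSum_mellin (fun n => Or.inr n.cast_add_one_pos)
    (one_pos.trans hs) (fun t ht => hasSum_boseKernel hz ht) hsum

end BoseKernel

section ExpZeta

variable {b : ℝ}

lemma norm_exp_two_pi_mul_I_mul_ofReal (b : ℝ) : ‖cexp (2 * π * I * b)‖ = 1 := by
  simp [norm_exp]

lemma exp_two_pi_mul_I_mul_ofReal_ne_one (hb : (b : UnitAddCircle) ≠ 0) :
    cexp (2 * π * I * b) ≠ 1 := by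
  intro h
  obtain ⟨n, hn⟩ := exp_eq_one_iff.mp h
  refine hb ((AddCircle.coe_eq_zero_iff 1).mpr ⟨n, ?_⟩)
  have hbn : (n : ℂ) = b := mul_right_cancel₀ two_pi_I_ne_zero (by rw [← hn]; ring)
  simpa using mod_cast hbn

lemma hasSum_expZeta_succ (b : ℝ) {s : ℂ} (hs : 1 < s.re) :
    HasSum (fun n : ℕ => cexp (2 * π * I * b) ^ (n + 1) / ((n : ℂ) + 1) ^ s) (expZeta b s) := by
  have h := (hasSum_nat_add_iff' 1).mpr (hasSum_expZeta_of_one_lt_re b hs)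
  simpa [zero_cpow (ne_zero_of_one_lt_re hs), ← Complex.exp_nat_mul, mul_comm] using h

lemma mellin_boseKernel_eq_Gamma_mul_expZeta (hb : (b : UnitAddCircle) ≠ 0) {s : ℂ}
    (hs : 0 < s.re) :
    mellin (boseKernel (cexp (2 * π * I * b))) s = Complex.Gamma s * expZeta b s := by
  have hz := (norm_exp_two_pi_mul_I_mul_ofReal b).le
  have hz1 := exp_two_pi_mul_I_mul_ofReal_ne_one hb
  let U : Set ℂ := {s | 0 < s.re}
  have hU : IsOpen U := isOpen_lt continuous_const continuous_re
  have hmellin : AnalyticOnNhd ℂ (mellin (boseKernel (cexp (2 * π * I * b)))) U :=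
    DifferentiableOn.analyticOnNhd
      (fun _ hs => (differentiableAt_mellin_boseKernel hz hz1 hs).differentiableWithinAt) hU
  have hGamma : DifferentiableOn ℂ Complex.Gamma U := fun s (hs : 0 < s.re) =>
    (differentiableAt_Gamma s fun m h => hs.not_ge (by simp [h])).differentiableWithinAt
  have hzeta : AnalyticOnNhd ℂ (fun s => Complex.Gamma s * expZeta b s) U :=
    (hGamma.mul (differentiable_expZeta_of_ne_zero hb).differentiableOn).analyticOnNhd hU
  have heq : ∀ᶠ s in 𝓝 (2 : ℂ),
      mellin (boseKernel (cexp (2 * π * I * b))) s = Complex.Gamma s * expZeta b s := by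
    filter_upwards [continuous_re.continuousAt.eventually_const_lt (by simp : (1 : ℝ) < (2 : ℂ).re)]
      with s hs
    exact (hasSum_mellin_boseKernel hz hs).unique ((hasSum_expZeta_succ b hs).mul_left _)
  exact hmellin.eqOn_of_preconnected_of_eventuallyEq hzeta
    (convex_halfSpace_re_gt 0).isPreconnected (by simp [U]) heq hs

lemma expZeta_one (hb : (b : UnitAddCircle) ≠ 0) :
    expZeta b 1 = -Complex.log (1 - cexp (2 * π * I * b)) := by
  rw [← mellin_boseKernel_one (norm_exp_two_pi_mul_I_mul_ofReal b).le
    (exp_two_pi_mul_I_mul_ofReal_ne_one hb),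
    mellin_boseKernel_eq_Gamma_mul_expZeta hb (by simp), Complex.Gamma_one, one_mul]

lemma expZeta_natCast_eq_polylog {k : ℕ} (hk : 1 ≤ k) (hb : (b : UnitAddCircle) ≠ 0 ∨ k ≠ 1) :
    expZeta b k = polylog k (cexp (2 * π * I * b)) := by
  rcases eq_or_ne k 1 with rfl | hk1
  · simpa [polylog] using expZeta_one (hb.resolve_right (not_not.mpr rfl))
  · have hre : 1 < (k : ℂ).re := by simpa using hk.lt_of_ne' hk1
    simpa [polylog, hk1] using (hasSum_expZeta_succ b hre).tsum_eq.symm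

end ExpZeta

lemma exp_pi_mul_I_mul_intCast_div_two (m : ℤ) : cexp (π * I * m / 2) = I ^ m := by
  rw [show (π * I * m / 2 : ℂ) = m * (π / 2 * I) by ring, exp_int_mul, exp_pi_div_two_mul_I]

theorem hurwitz_formula_general (k : ℕ) (hk : 1 ≤ k) (b : ℝ)
    (hb : (b : UnitAddCircle) ≠ 0 ∨ k ≠ 1) :
    (((2 * π : ℝ) : ℂ) ^ k / (Nat.factorial (k - 1) : ℂ)) *
        hurwitzZeta (b : UnitAddCircle) (1 - (k : ℂ)) =
      Complex.I ^ (-(k : ℤ)) * polylog k (Complex.exp (2 * π * Complex.I * b))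
        + Complex.I ^ (k : ℤ) * polylog k (Complex.exp (-(2 * π * Complex.I * b))) := by
  have hk_ne_neg (n : ℕ) : (k : ℂ) ≠ -n := by
    norm_cast
    omega
  have hplus := expZeta_natCast_eq_polylog hk hb
  have hminus : expZeta (-b : UnitAddCircle) k = polylog k (cexp (-(2 * π * I * b))) := by
    simpa using expZeta_natCast_eq_polylog (b := -b) hk (by simpa using hb)
  have hGamma : Complex.Gamma k = (k - 1).factorial := by
    rw [← Complex.Gamma_nat_eq_factorial, Nat.cast_pred hk, sub_add_cancel]
  have hI : cexp (π * I * k / 2) = I ^ (k : ℤ) := by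
    simpa using exp_pi_mul_I_mul_intCast_div_two k
  have hI_neg : cexp (-π * I * k / 2) = I ^ (-(k : ℤ)) := by
    simpa using exp_pi_mul_I_mul_intCast_div_two (-k)
  have hpi : (2 * π : ℂ) ^ k ≠ 0 := pow_ne_zero k (by simp [Real.pi_ne_zero])
  have hfact : ((k - 1).factorial : ℂ) ≠ 0 := mod_cast (k - 1).factorial_ne_zero
  rw [hurwitzZeta_one_sub _ hk_ne_neg (by simpa using hb), hplus, hminus, hGamma, hI,
    hI_neg, cpow_neg, cpow_natCast]
  push_cast
  field_simp

theorem hurwitz_formula (k : ℕ) (hk : 1 ≤ k) (b : ℝ) (hb0 : 0 < b) (hb1 : b < 1) :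
    (((2 * π : ℝ) : ℂ) ^ k / (Nat.factorial (k - 1) : ℂ)) *
        hurwitzZeta (b : UnitAddCircle) (1 - (k : ℂ)) =
      Complex.I ^ (-(k : ℤ)) * polylog k (Complex.exp (2 * π * Complex.I * b))
        + Complex.I ^ (k : ℤ) * polylog k (Complex.exp (-(2 * π * Complex.I * b))) :=
  hurwitz_formula_general k hk b <| Or.inl <|
    (AddCircle.coe_eq_zero_iff_of_mem_Ico ⟨hb0.le, hb1⟩).not.mpr hb0.ne'
end
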